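/- arXiv:2405.15091 — 8 statements merged into one kernel-verified Lean document; each statement's English description precedes it below -/
import Mathlib

section
/- For every symplectic alternating algebra L over a field 𝔽 and every integer n ≥ 0, the n-th term of the upper central series equals the orthogonal complement of the (n+1)-st term of the lower central series: Z_n(L) = (L^{n+1})^⊥. Consequently dim Z_n(L) + dim L^{n+1} = dim L. -/
/-!
The compatibility `(u·v, w) = (v·w, u)` and the skew-symmetry of both operations make every right
multiplication self-adjoint: `(x·y, u) = (x, u·y)`. Hence `x ⊥ U·L` if and only if `x·L ⊆ U^⊥`, so
taking orthogonal complements turns the step `Lⁿ ↦ Lⁿ·L` of the lower central series into the step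
of the upper one, and `L^⊥ = 0` starts the induction. The dimension formula is
`dim U^⊥ + dim U = dim L` for a nondegenerate form.
-/

variable {𝔽 : Type*} [Field 𝔽] {L : Type*} [AddCommGroup L] [Module 𝔽 L]

structure SymplecticAlternatingAlgebra (𝔽 L : Type*) [Field 𝔽] [AddCommGroup L]
    [Module 𝔽 L] where
  form : L →ₗ[𝔽] L →ₗ[𝔽] 𝔽
  mul : L →ₗ[𝔽] L →ₗ[𝔽] L
  form_alt : ∀ x, form x x = 0
  form_nondeg : ∀ x, (∀ y, form x y = 0) → x = 0
  mul_alt : ∀ x, mul x x = 0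
  compat : ∀ u v w, form (mul u v) w = form (mul v w) u

namespace SymplecticAlternatingAlgebra

variable (S : SymplecticAlternatingAlgebra 𝔽 L)

/-- `U·V`, the span of all products `u·v`. -/
def prodSub (U V : Submodule 𝔽 L) : Submodule 𝔽 L := Submodule.map₂ S.mul U V

/-- An ideal: `I·L ⊆ I`. -/
def IsIdeal (I : Submodule 𝔽 L) : Prop := S.prodSub I ⊤ ≤ I

/-- Orthogonal complement with respect to the form. -/
def perp (U : Submodule 𝔽 L) : Submodule 𝔽 L where
  carrier := {x | ∀ u ∈ U, S.form x u = 0}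
  add_mem' := by
    intro a b ha hb u hu
    simp [map_add, ha u hu, hb u hu]
  zero_mem' := by
    intro u hu
    simp
  smul_mem' := by
    intro c a ha u hu
    simp [ha u hu]

/-- `lcs n = L^(n+1)`: the lower central series, `lcs 0 = L¹ = L`. -/
def lcs : ℕ → Submodule 𝔽 L
  | 0 => ⊤
  | n + 1 => S.prodSub (lcs n) ⊤

/-- `ucs n = Z_n(L)`: the upper central series. -/
def ucs : ℕ → Submodule 𝔽 L
  | 0 => ⊥
  | n + 1 => ⨅ y : L, (ucs n).comap (S.mul.flip y)

/-- The center `Z(L)`. -/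
def center : Submodule 𝔽 L := ⨅ y : L, LinearMap.ker (S.mul.flip y)

/-- Nilpotency: some term of the lower central series vanishes. -/
def IsNilpotent : Prop := ∃ n, S.lcs n = ⊥

/-- `s` generates `L` as an algebra: the smallest subspace containing `s`
and closed under the multiplication is `L` itself. -/
def Generates (s : Set L) : Prop :=
  ∀ M : Submodule 𝔽 L, s ⊆ (M : Set L) → S.prodSub M M ≤ M → M = ⊤

end SymplecticAlternatingAlgebra

open SymplecticAlternatingAlgebra Module


namespace SymplecticAlternatingAlgebra

variable (S : SymplecticAlternatingAlgebra 𝔽 L)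

theorem isAlt_form : S.form.IsAlt := S.form_alt

theorem isAlt_mul : S.mul.IsAlt := S.mul_alt

theorem form_mul_left (x y u : L) : S.form (S.mul x y) u = S.form x (S.mul u y) :=
  calc
    S.form (S.mul x y) u = S.form (S.mul y u) x := S.compat x y u
    _ = -S.form x (S.mul y u) := (S.isAlt_form.neg x (S.mul y u)).symm
    _ = S.form x (-S.mul y u) := (map_neg (S.form x) (S.mul y u)).symm
    _ = S.form x (S.mul u y) := by rw [S.isAlt_mul.neg]

theorem perp_prodSub (U V : Submodule 𝔽 L) :
    S.perp (S.prodSub U V) = ⨅ y ∈ V, (S.perp U).comap (S.mul.flip y) := by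
  ext x
  calc
    x ∈ S.perp (S.prodSub U V) ↔ ∀ u ∈ U, ∀ y ∈ V, S.form x (S.mul u y) = 0 :=
      -- `x ⊥ W` unfolds to `W ≤ ker (x, ·)`, which for `W = U·V` can be tested on products.
      (Submodule.map₂_le : S.prodSub U V ≤ LinearMap.ker (S.form x) ↔ _)
    _ ↔ ∀ y ∈ V, ∀ u ∈ U, S.form (S.mul x y) u = 0 := by
      simp only [form_mul_left]
      exact forall₂_comm
    _ ↔ x ∈ ⨅ y ∈ V, (S.perp U).comap (S.mul.flip y) := by
      simp only [Submodule.mem_iInf]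
      rfl

theorem perp_top : S.perp ⊤ = ⊥ :=
  eq_bot_iff.2 fun x hx => S.form_nondeg x fun _ => hx _ Submodule.mem_top

theorem perp_lcs (n : ℕ) : S.perp (S.lcs n) = S.ucs n := by
  induction n with
  | zero => exact S.perp_top
  | succ n ih => simp only [lcs, ucs, perp_prodSub, ih, Submodule.mem_top, iInf_pos]

theorem nondegenerate_form : S.form.Nondegenerate :=
  S.isAlt_form.isRefl.nondegenerate_iff_separatingLeft.2 S.form_nondeg

theorem perp_eq_orthogonal (U : Submodule 𝔽 L) :
    S.perp U = LinearMap.BilinForm.orthogonal S.form U := by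
  ext x
  exact forall₂_congr fun _ _ => S.isAlt_form.eq_iff

theorem finrank_perp_add_finrank [FiniteDimensional 𝔽 L] (U : Submodule 𝔽 L) :
    finrank 𝔽 (S.perp U) + finrank 𝔽 U = finrank 𝔽 L := by
  rw [perp_eq_orthogonal, LinearMap.BilinForm.finrank_orthogonal S.nondegenerate_form,
    Nat.sub_add_cancel U.finrank_le]

end SymplecticAlternatingAlgebra

theorem ucs_eq_perp_lcs [FiniteDimensional 𝔽 L]
    (S : SymplecticAlternatingAlgebra 𝔽 L) (n : ℕ) :
    S.ucs n = S.perp (S.lcs n) ∧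
    Module.finrank 𝔽 (S.ucs n) + Module.finrank 𝔽 (S.lcs n) = Module.finrank 𝔽 L := by
  have ucs_eq : S.ucs n = S.perp (S.lcs n) := (S.perp_lcs n).symm
  exact ⟨ucs_eq, ucs_eq ▸ S.finrank_perp_add_finrank (S.lcs n)⟩
end

section
/- Any one-dimensional ideal of a symplectic alternating algebra L over a field 𝔽 is contained in the center Z(L). -/
/-!
If `x ∈ I` and `y ∈ I^⊥`, then `(x·y, z) = (z·x, y) = 0` for every `z`, so `I·I^⊥ = 0` for every
ideal `I`. Let `I` be spanned by `x`. An element `y ∉ I^⊥` satisfies `(x, y) ≠ 0`; writing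
`x·y = c x`, we get `c (x, y) = (x·y, y) = (y·y, x) = 0`, so again `x·y = 0`.
-/

variable {𝔽 : Type*} [Field 𝔽] {L : Type*} [AddCommGroup L] [Module 𝔽 L]

open SymplecticAlternatingAlgebra Module

namespace SymplecticAlternatingAlgebra

variable {S : SymplecticAlternatingAlgebra 𝔽 L} {I : Submodule 𝔽 L} {x y : L}

theorem mem_center : x ∈ S.center ↔ ∀ y, S.mul x y = 0 := by
  simp only [center, Submodule.mem_iInf, LinearMap.mem_ker, LinearMap.flip_apply]

theorem form_mul_right_self : S.form (S.mul x y) y = 0 := by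
  rw [S.compat, S.mul_alt, map_zero, LinearMap.zero_apply]

theorem form_eq_zero_comm : S.form x y = 0 ↔ S.form y x = 0 :=
  (LinearMap.IsAlt.isRefl S.form_alt).eq_iff

theorem IsIdeal.mul_mem_right (hI : S.IsIdeal I) (hx : x ∈ I) (z : L) : S.mul x z ∈ I :=
  Submodule.map₂_le.mp hI x hx z Submodule.mem_top

theorem IsIdeal.mul_mem_left (hI : S.IsIdeal I) (hx : x ∈ I) (z : L) : S.mul z x ∈ I := by
  rw [← LinearMap.IsAlt.neg S.mul_alt x z]
  exact I.neg_mem (hI.mul_mem_right hx z)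

theorem IsIdeal.prodSub_perp_eq_bot (hI : S.IsIdeal I) : S.prodSub I (S.perp I) = ⊥ := by
  refine le_bot_iff.mp (Submodule.map₂_le.mpr fun x hx y hy => S.form_nondeg _ fun z => ?_)
  calc S.form (S.mul x y) z = S.form (S.mul z x) y := by rw [S.compat, S.compat]
    _ = 0 := form_eq_zero_comm.mp (hy _ (hI.mul_mem_left hx z))

theorem IsIdeal.mul_eq_zero_of_mem_perp (hI : S.IsIdeal I) (hx : x ∈ I) (hy : y ∈ S.perp I) :
    S.mul x y = 0 := by
  rw [← Submodule.mem_bot 𝔽, ← hI.prodSub_perp_eq_bot]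
  exact Submodule.apply_mem_map₂ S.mul hx hy

theorem mem_perp_span_singleton : y ∈ S.perp (Submodule.span 𝔽 {x}) ↔ S.form x y = 0 := by
  rw [form_eq_zero_comm]
  refine ⟨fun hy => hy x (Submodule.mem_span_singleton_self x), fun hyx u hu => ?_⟩
  obtain ⟨c, rfl⟩ := Submodule.mem_span_singleton.mp hu
  rw [map_smul, hyx, smul_zero]

theorem mul_eq_zero_of_mul_mem_span_singleton (hmul : S.mul x y ∈ Submodule.span 𝔽 {x})
    (hxy : S.form x y ≠ 0) : S.mul x y = 0 := by
  obtain ⟨c, hc⟩ := Submodule.mem_span_singleton.mp hmul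
  have hform : c * S.form x y = 0 := by
    rw [← smul_eq_mul, ← LinearMap.smul_apply, ← map_smul, hc, form_mul_right_self]
  rw [← hc, (mul_eq_zero.mp hform).resolve_right hxy, zero_smul]

theorem IsIdeal.mem_center_of_span_singleton (hI : S.IsIdeal (Submodule.span 𝔽 {x})) :
    x ∈ S.center := by
  have hx := Submodule.mem_span_singleton_self (R := 𝔽) x
  refine mem_center.mpr fun y => ?_
  by_cases hxy : S.form x y = 0
  · exact hI.mul_eq_zero_of_mem_perp hx (mem_perp_span_singleton.mpr hxy)
  · exact mul_eq_zero_of_mul_mem_span_singleton (hI.mul_mem_right hx y) hxy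

end SymplecticAlternatingAlgebra

theorem one_dim_ideal_le_center_general (S : SymplecticAlternatingAlgebra 𝔽 L)
    (I : Submodule 𝔽 L) (hI : S.IsIdeal I) (hdim : Module.finrank 𝔽 I = 1) :
    I ≤ S.center := by
  intro x hx
  obtain rfl | hx0 := eq_or_ne x 0
  · exact zero_mem _
  · rw [eq_span_singleton_of_mem_of_finrank_eq_one hdim hx hx0] at hI
    exact hI.mem_center_of_span_singleton

theorem one_dim_ideal_le_center [FiniteDimensional 𝔽 L]
    (S : SymplecticAlternatingAlgebra 𝔽 L) (I : Submodule 𝔽 L) (hI : S.IsIdeal I)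
    (hdim : Module.finrank 𝔽 I = 1) :
    I ≤ S.center :=
  one_dim_ideal_le_center_general S I hI hdim
end

section
/- Let L be a symplectic alternating algebra over a field 𝔽 and let I be an abelian ideal of L such that L^{n+1} ⊆ I (i.e. L is abelian-by-(nilpotent of class at most n)). Then L is nilpotent of class at most 2n + 1, i.e. L^{2n+2} = {0}. -/
/-!
Compatibility of the form and the product says that `(u·v, w)` is invariant under cyclic
permutations of `u, v, w`; together with anticommutativity it makes multiplication by a fixed
vector self-adjoint. Hence the factors of a left-normed product can be moved across the form one
at a time, and `(L^{k+m}, L^j) = 0` if and only if `(L^k, L^{j+m}) = 0`. Moving `n` factors of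
`L^{m+n+2}`, paired with `L`, gives `(L^{m+1}·L, L^{n+1})`, which is `(L^{n+1}·L^{m+1}, L)` by
cyclicity. By nondegeneracy `L^{m+n+2} = 0` exactly when `L^{m+1}·L^{n+1} = 0`.
-/

variable {𝔽 : Type*} [Field 𝔽] {L : Type*} [AddCommGroup L] [Module 𝔽 L]

open SymplecticAlternatingAlgebra Module

namespace SymplecticAlternatingAlgebra

variable (S : SymplecticAlternatingAlgebra 𝔽 L)

theorem le_perp_comm {U V : Submodule 𝔽 L} : U ≤ S.perp V ↔ V ≤ S.perp U := by
  have form_isAlt : S.form.IsAlt := S.form_alt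
  exact ⟨fun h v hv u hu => form_isAlt.isRefl u v (h hu v hv),
    fun h u hu v hv => form_isAlt.isRefl v u (h hv u hu)⟩

theorem prodSub_le_perp_iff {U V W : Submodule 𝔽 L} :
    S.prodSub U V ≤ S.perp W ↔ ∀ u ∈ U, ∀ v ∈ V, ∀ w ∈ W, S.form (S.mul u v) w = 0 :=
  Submodule.map₂_le

theorem prodSub_le_perp_rotate {U V W : Submodule 𝔽 L} :
    S.prodSub U V ≤ S.perp W ↔ S.prodSub V W ≤ S.perp U := by
  rw [prodSub_le_perp_iff, prodSub_le_perp_iff]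
  exact ⟨fun h v hv w hw u hu => S.compat u v w ▸ h u hu v hv w hw,
    fun h u hu v hv w hw => S.compat u v w ▸ h v hv w hw u hu⟩

theorem prodSub_comm (U V : Submodule 𝔽 L) : S.prodSub U V = S.prodSub V U := by
  have mul_isAlt : S.mul.IsAlt := S.mul_alt
  have prodSub_le_swap (U V : Submodule 𝔽 L) : S.prodSub U V ≤ S.prodSub V U :=
    Submodule.map₂_le.2 fun u hu v hv => by
      rw [← mul_isAlt.neg v u]
      exact neg_mem (Submodule.apply_mem_map₂ S.mul hv hu)
  exact le_antisymm (prodSub_le_swap U V) (prodSub_le_swap V U)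

theorem prodSub_le_perp_iff_le_perp_prodSub {U V W : Submodule 𝔽 L} :
    S.prodSub U W ≤ S.perp V ↔ U ≤ S.perp (S.prodSub V W) := by
  rw [S.prodSub_comm U W, ← S.prodSub_le_perp_rotate, S.le_perp_comm]

theorem lcs_add_le_perp_lcs_iff (k m j : ℕ) :
    S.lcs (k + m) ≤ S.perp (S.lcs j) ↔ S.lcs k ≤ S.perp (S.lcs (j + m)) := by
  induction m generalizing j with
  | zero => rfl
  | succ m ih =>
    calc S.lcs (k + (m + 1)) ≤ S.perp (S.lcs j)
      _ ↔ S.lcs (k + m) ≤ S.perp (S.lcs (j + 1)) := S.prodSub_le_perp_iff_le_perp_prodSub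
      _ ↔ S.lcs k ≤ S.perp (S.lcs (j + (m + 1))) := by rw [ih, add_right_comm, add_assoc]

theorem lcs_add_add_one_eq_bot_iff (m n : ℕ) :
    S.lcs (m + n + 1) = ⊥ ↔ S.prodSub (S.lcs m) (S.lcs n) = ⊥ :=
  calc S.lcs (m + n + 1) = ⊥
    _ ↔ S.lcs (m + 1 + n) ≤ S.perp (S.lcs 0) := by
      rw [add_right_comm, eq_bot_iff, ← S.perp_top, lcs]
    _ ↔ S.prodSub (S.lcs m) ⊤ ≤ S.perp (S.lcs n) := by
      rw [S.lcs_add_le_perp_lcs_iff, zero_add, lcs]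
    _ ↔ S.prodSub (S.lcs m) (S.lcs n) = ⊥ := by
      rw [← S.prodSub_le_perp_rotate, S.perp_top, le_bot_iff, S.prodSub_comm]

end SymplecticAlternatingAlgebra

theorem abelian_by_nilpotent_is_nilpotent_general
    (S : SymplecticAlternatingAlgebra 𝔽 L) (I : Submodule 𝔽 L)
    (hab : S.prodSub I I = ⊥) (n : ℕ) (hle : S.lcs n ≤ I) :
    S.lcs (2 * n + 1) = ⊥ := by
  have lcs_abelian : S.prodSub (S.lcs n) (S.lcs n) = ⊥ :=
    eq_bot_mono (Submodule.map₂_le_map₂ hle hle) hab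
  rwa [two_mul, S.lcs_add_add_one_eq_bot_iff]

theorem abelian_by_nilpotent_is_nilpotent [FiniteDimensional 𝔽 L]
    (S : SymplecticAlternatingAlgebra 𝔽 L) (I : Submodule 𝔽 L) (hI : S.IsIdeal I)
    (hab : S.prodSub I I = ⊥) (n : ℕ) (hle : S.lcs n ≤ I) :
    S.lcs (2 * n + 1) = ⊥ :=
  abelian_by_nilpotent_is_nilpotent_general S I hab n hle
end

section
/- Let L be a symplectic alternating algebra over a field 𝔽 of characteristic different from 2. If the multiplication of L is associative ((u·v)·w = u·(v·w) for all u, v, w ∈ L), or if L is a Lie algebra under its multiplication (the Jacobi identity (u·v)·w + (v·w)·u + (w·u)·v = 0 holds for all u, v, w ∈ L), then L³ = {0}, i.e. (u·v)·w = 0 for all u, v, w ∈ L. -/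
/-!
Since `(u·v, w)` is an alternating trilinear form, every right multiplication `R u : x ↦ x·u` is
self-adjoint with respect to the symplectic form.

If the product is associative, then `R (u·v) = R v ∘ R u` has adjoint
`R u ∘ R v = R (v·u) = -R (u·v)`. If the Jacobi identity holds, then `R (u·v)` is the commutator of
`R v` and `R u`, and a commutator of self-adjoint maps is skew-adjoint. In both cases `R (u·v)` is
both self-adjoint and skew-adjoint, hence zero in characteristic different from 2.
-/

variable {𝔽 : Type*} [Field 𝔽] {L : Type*} [AddCommGroup L] [Module 𝔽 L]

open SymplecticAlternatingAlgebra Module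

section SkewAdjoint

variable {R M N : Type*} [CommRing R] [AddCommGroup M] [Module R M] [AddCommGroup N] [Module R N]
  {B : M →ₗ[R] M →ₗ[R] N}

theorem isSkewAdjoint_mul_of_mul_eq_neg_mul {f g : Module.End R M} (hf : B.IsSelfAdjoint f)
    (hg : B.IsSelfAdjoint g) (hfg : g * f = -(f * g)) :
    B.IsSkewAdjoint (f * g : Module.End R M) := by
  have hadj : B.IsAdjointPair B (f * g : Module.End R M) (g * f : Module.End R M) := hf.mul hg
  rw [hfg] at hadj
  exact hadj

theorem isSkewAdjoint_lie {f g : Module.End R M} (hf : B.IsSelfAdjoint f)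
    (hg : B.IsSelfAdjoint g) : B.IsSkewAdjoint (⁅f, g⁆ : Module.End R M) := by
  have hfg : B.IsAdjointPair B (f * g : Module.End R M) (g * f : Module.End R M) := hf.mul hg
  have hgf : B.IsAdjointPair B (g * f : Module.End R M) (f * g : Module.End R M) := hg.mul hf
  have hsub := hfg.sub hgf
  rw [← neg_sub (⇑(f * g)) (⇑(g * f))] at hsub
  exact hsub

theorem eq_zero_of_isSelfAdjoint_of_isSkewAdjoint (hB : B.SeparatingLeft)
    (h2 : IsSMulRegular N (2 : R)) {f : M → M} (hf : B.IsSelfAdjoint f)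
    (hf' : B.IsSkewAdjoint f) : f = 0 := by
  funext x
  refine hB (f x) fun y => h2.right_eq_zero_of_smul ?_
  have hneg : B (f x) y = -B (f x) y := calc
    B (f x) y = B x (-f y) := hf' x y
    _ = -B (f x) y := by rw [map_neg, hf x y]
  rw [two_smul]
  exact eq_neg_iff_add_eq_zero.mp hneg

end SkewAdjoint

namespace SymplecticAlternatingAlgebra

variable (S : SymplecticAlternatingAlgebra 𝔽 L)

theorem mul_anticomm (x y : L) : -S.mul x y = S.mul y x :=
  LinearMap.IsAlt.neg S.mul_alt x y

/-- The right multiplication `x ↦ x·u`, as an endomorphism of `L` depending linearly on `u`. -/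
def mulRight : L →ₗ[𝔽] Module.End 𝔽 L := S.mul.flip

theorem isSelfAdjoint_mulRight (u : L) : S.form.IsSelfAdjoint (S.mulRight u) := fun x y => calc
  S.form (S.mul x u) y = S.form (S.mul u y) x := S.compat x u y
  _ = -S.form x (S.mul u y) := (LinearMap.IsAlt.neg S.form_alt x _).symm
  _ = S.form x (S.mul y u) := by rw [← map_neg, S.mul_anticomm]

variable {S}

theorem mulRight_mul_of_assoc
    (hassoc : ∀ u v w, S.mul (S.mul u v) w = S.mul u (S.mul v w)) (u v : L) :
    S.mulRight (S.mul u v) = S.mulRight v * S.mulRight u :=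
  LinearMap.ext fun x => (hassoc x u v).symm

theorem mulRight_mul_of_jacobi
    (hjacobi : ∀ u v w, S.mul (S.mul u v) w + S.mul (S.mul v w) u + S.mul (S.mul w u) v = 0)
    (u v : L) : S.mulRight (S.mul u v) = ⁅S.mulRight v, S.mulRight u⁆ := by
  ext x
  calc S.mul x (S.mul u v)
    _ = -S.mul (S.mul u v) x := (S.mul_anticomm _ _).symm
    _ = S.mul (S.mul v x) u + S.mul (S.mul x u) v :=
      neg_eq_of_add_eq_zero_right (by rw [← add_assoc, hjacobi])
    _ = S.mul (S.mul x u) v - S.mul (S.mul x v) u := by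
      rw [← S.mul_anticomm x v, map_neg, LinearMap.neg_apply, add_comm, sub_eq_add_neg]

theorem isSkewAdjoint_mulRight_mul_of_assoc
    (hassoc : ∀ u v w, S.mul (S.mul u v) w = S.mul u (S.mul v w)) (u v : L) :
    S.form.IsSkewAdjoint (S.mulRight (S.mul u v)) := by
  have hanti : S.mulRight u * S.mulRight v = -(S.mulRight v * S.mulRight u) := by
    simp only [← mulRight_mul_of_assoc hassoc, ← map_neg, S.mul_anticomm]
  rw [mulRight_mul_of_assoc hassoc]
  exact isSkewAdjoint_mul_of_mul_eq_neg_mul (S.isSelfAdjoint_mulRight v)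
    (S.isSelfAdjoint_mulRight u) hanti

theorem isSkewAdjoint_mulRight_mul_of_jacobi
    (hjacobi : ∀ u v w, S.mul (S.mul u v) w + S.mul (S.mul v w) u + S.mul (S.mul w u) v = 0)
    (u v : L) : S.form.IsSkewAdjoint (S.mulRight (S.mul u v)) := by
  rw [mulRight_mul_of_jacobi hjacobi]
  exact isSkewAdjoint_lie (S.isSelfAdjoint_mulRight v) (S.isSelfAdjoint_mulRight u)

theorem mul_eq_zero_of_isSkewAdjoint_mulRight (hchar : ringChar 𝔽 ≠ 2) {u : L}
    (hu : S.form.IsSkewAdjoint (S.mulRight u)) (w : L) : S.mul u w = 0 := by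
  have h2 : IsSMulRegular 𝔽 (2 : 𝔽) := IsSMulRegular.of_ne_zero (Ring.two_ne_zero hchar)
  have hzero := eq_zero_of_isSelfAdjoint_of_isSkewAdjoint S.form_nondeg h2
    (S.isSelfAdjoint_mulRight u) hu
  calc S.mul u w = -S.mulRight u w := (S.mul_anticomm w u).symm
    _ = 0 := by rw [hzero, Pi.zero_apply, neg_zero]

end SymplecticAlternatingAlgebra

theorem assoc_or_lie_implies_cube_zero_general
    (S : SymplecticAlternatingAlgebra 𝔽 L) (hchar : ringChar 𝔽 ≠ 2)
    (h : (∀ u v w, S.mul (S.mul u v) w = S.mul u (S.mul v w)) ∨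
         (∀ u v w, S.mul (S.mul u v) w + S.mul (S.mul v w) u + S.mul (S.mul w u) v = 0)) :
    ∀ u v w, S.mul (S.mul u v) w = 0 := by
  intro u v
  apply mul_eq_zero_of_isSkewAdjoint_mulRight hchar
  rcases h with hassoc | hjacobi
  · exact isSkewAdjoint_mulRight_mul_of_assoc hassoc u v
  · exact isSkewAdjoint_mulRight_mul_of_jacobi hjacobi u v

theorem assoc_or_lie_implies_cube_zero [FiniteDimensional 𝔽 L]
    (S : SymplecticAlternatingAlgebra 𝔽 L) (hchar : ringChar 𝔽 ≠ 2)
    (h : (∀ u v w, S.mul (S.mul u v) w = S.mul u (S.mul v w)) ∨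
         (∀ u v w, S.mul (S.mul u v) w + S.mul (S.mul v w) u + S.mul (S.mul w u) v = 0)) :
    ∀ u v w, S.mul (S.mul u v) w = 0 :=
  assoc_or_lie_implies_cube_zero_general S hchar h
end

section
/- Let I and J be ideals of a symplectic alternating algebra L over a field 𝔽. Then I·L ⊆ J if and only if I·(J^⊥) = {0}. In particular, for every m ≥ 1, L^m · Z_m(L) = {0}. -/
/-!
The trilinear form `(u·v, w)` changes sign when `v` and `w` are exchanged, so for subspaces `U`,
`V`, `W` the conditions `U·V ⊆ W^⊥` and `U·W ⊆ V^⊥` both say that this form vanishes on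
`U × V × W`. Taking `V = L`, where `L^⊥ = 0`, and `J^⊥` for `W` gives `I·L ⊆ J^⊥⊥ ↔ I·J^⊥ = 0`,
and `J^⊥⊥ = J` because the form embeds the finite-dimensional `J` into the dual of `L`. The same
exchange shows inductively that `Z_m(L) = (L^(m+1))^⊥`, so `L^m·Z_m(L) = 0` is the case `I = L^m`,
`J = L^(m+1)`.
-/

variable {𝔽 : Type*} [Field 𝔽] {L : Type*} [AddCommGroup L] [Module 𝔽 L]

open SymplecticAlternatingAlgebra Module

namespace SymplecticAlternatingAlgebra

variable (S : SymplecticAlternatingAlgebra 𝔽 L)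

theorem form_injective : Function.Injective S.form :=
  (injective_iff_map_eq_zero S.form).2 fun x hx => S.form_nondeg x fun y => by
    rw [hx, LinearMap.zero_apply]

theorem form_mul_swap (u v w : L) : S.form (S.mul u v) w = -S.form (S.mul u w) v := by
  rw [S.compat, S.compat, ← S.isAlt_mul.neg u w, map_neg, LinearMap.neg_apply]

theorem mem_perp {U : Submodule 𝔽 L} {x : L} : x ∈ S.perp U ↔ ∀ u ∈ U, S.form x u = 0 :=
  Iff.rfl

theorem le_perp_perp (U : Submodule 𝔽 L) : U ≤ S.perp (S.perp U) :=
  S.le_perp_comm.1 le_rfl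

theorem perp_eq_dualCoannihilator_map_form (U : Submodule 𝔽 L) :
    S.perp U = (U.map S.form).dualCoannihilator := by
  ext x
  simp only [mem_perp, Submodule.mem_dualCoannihilator, Submodule.mem_map, forall_exists_index,
    and_imp, forall_apply_eq_imp_iff₂, S.isAlt_form.eq_iff (x := x)]

theorem perp_perp (U : Submodule 𝔽 L) [FiniteDimensional 𝔽 U] : S.perp (S.perp U) = U := by
  refine le_antisymm (fun x hx => ?_) (S.le_perp_perp U)
  have hform : S.form x ∈ U.map S.form := by
    rw [← Subspace.dualCoannihilator_dualAnnihilator_eq (W := U.map S.form),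
      ← perp_eq_dualCoannihilator_map_form, Submodule.mem_dualAnnihilator]
    exact hx
  exact (S.form_injective.mem_set_image).1 hform

theorem prodSub_le_perp_comm {U V W : Submodule 𝔽 L} :
    S.prodSub U V ≤ S.perp W ↔ S.prodSub U W ≤ S.perp V := by
  suffices h : ∀ {V W : Submodule 𝔽 L}, S.prodSub U V ≤ S.perp W → S.prodSub U W ≤ S.perp V from
    ⟨h, h⟩
  intro V W h
  refine Submodule.map₂_le.2 fun u hu w hw v hv => ?_
  rw [form_mul_swap, h (Submodule.apply_mem_map₂ _ hu hv) w hw, neg_zero]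

theorem prodSub_perp_eq_bot_iff {U V : Submodule 𝔽 L} :
    S.prodSub U (S.perp V) = ⊥ ↔ S.prodSub U ⊤ ≤ S.perp (S.perp V) := by
  rw [prodSub_le_perp_comm, perp_top, le_bot_iff]

theorem le_ucs_succ_iff {U : Submodule 𝔽 L} {n : ℕ} :
    U ≤ S.ucs (n + 1) ↔ S.prodSub U ⊤ ≤ S.ucs n := by
  simp only [ucs, prodSub, le_iInf_iff, Submodule.map₂_le]
  exact ⟨fun h u hu y _ => h y hu, fun h y u hu => h u hu y trivial⟩

theorem ucs_eq_perp_lcs (n : ℕ) : S.ucs n = S.perp (S.lcs n) := by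
  induction n with
  | zero => exact S.perp_top.symm
  | succ n ih =>
    refine eq_of_forall_le_iff fun U => ?_
    calc U ≤ S.ucs (n + 1)
      _ ↔ S.prodSub U ⊤ ≤ S.perp (S.lcs n) := by rw [le_ucs_succ_iff, ih]
      _ ↔ S.prodSub (S.lcs n) U ≤ S.perp ⊤ := by rw [prodSub_le_perp_comm, prodSub_comm]
      _ ↔ S.lcs (n + 1) ≤ S.perp U := S.prodSub_le_perp_comm
      _ ↔ U ≤ S.perp (S.lcs (n + 1)) := S.le_perp_comm

theorem prodSub_lcs_ucs_succ (n : ℕ) : S.prodSub (S.lcs n) (S.ucs (n + 1)) = ⊥ := by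
  rw [ucs_eq_perp_lcs, prodSub_perp_eq_bot_iff]
  exact S.le_perp_perp (S.lcs (n + 1))

end SymplecticAlternatingAlgebra

theorem ideal_prod_le_iff_perp_general (S : SymplecticAlternatingAlgebra 𝔽 L)
    (I J : Submodule 𝔽 L) [FiniteDimensional 𝔽 J] :
    (S.prodSub I ⊤ ≤ J ↔ S.prodSub I (S.perp J) = ⊥) ∧
    (∀ m : ℕ, 1 ≤ m → S.prodSub (S.lcs (m - 1)) (S.ucs m) = ⊥) := by
  refine ⟨by rw [prodSub_perp_eq_bot_iff, perp_perp], fun m hm => ?_⟩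
  obtain ⟨n, rfl⟩ := Nat.exists_eq_add_of_le' hm
  exact S.prodSub_lcs_ucs_succ n

theorem ideal_prod_le_iff_perp [FiniteDimensional 𝔽 L]
    (S : SymplecticAlternatingAlgebra 𝔽 L) (I J : Submodule 𝔽 L)
    (hI : S.IsIdeal I) (hJ : S.IsIdeal J) :
    (S.prodSub I ⊤ ≤ J ↔ S.prodSub I (S.perp J) = ⊥) ∧
    (∀ m : ℕ, 1 ≤ m → S.prodSub (S.lcs (m - 1)) (S.ucs m) = ⊥) :=
  ideal_prod_le_iff_perp_general S I J
end

section
/- Let L be a nilpotent symplectic alternating algebra over a field 𝔽 with ideals I and J such that J = I + 𝔽x + 𝔽y where (x, y) = 1 and x, y ∈ I^⊥. Then J·L ⊆ I. Furthermore, if I is isotropic then J is abelian. -/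
/-!
Write `x·u = a + αx + βy` with `a ∈ I`. Pairing with `x` gives `β = 0`, because
`(x·u, x) = (x·x, u) = 0`. So right multiplication by `u` acts on `x` modulo `I` as the scalar `α`,
and since some power of it kills `x`, either `α = 0` or `x ∈ I`; in both cases `x·u ∈ I`. Exchanging
`x` and `y` gives `y·u ∈ I`.

If `I` is isotropic, then `J ⊆ I^⊥ ⊆ (J·L)^⊥`, and `(a·b, c) = (b·c, a)` shows that `J ⊆ (J·L)^⊥`
means `J·J = 0`.
-/

variable {𝔽 : Type*} [Field 𝔽] {L : Type*} [AddCommGroup L] [Module 𝔽 L]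

open SymplecticAlternatingAlgebra Module

section LinearAlgebra

variable {K V : Type*} [DivisionRing K] [AddCommGroup V] [Module K V] {U : Submodule K V}

theorem mem_of_mem_sup_span_singleton_of_apply_eq_zero {f : V →ₗ[K] K} (hU : U ≤ LinearMap.ker f)
    {y z : V} (hy : f y ≠ 0) (hz : z ∈ U ⊔ Submodule.span K {y}) (hfz : f z = 0) : z ∈ U := by
  obtain ⟨a, ha, b, hb, rfl⟩ := Submodule.mem_sup.mp hz
  obtain ⟨β, rfl⟩ := Submodule.mem_span_singleton.mp hb
  have hβ : β * f y = 0 := by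
    simpa only [map_add, map_smul, LinearMap.mem_ker.mp (hU ha), zero_add, smul_eq_mul] using hfz
  simpa only [(mul_eq_zero.mp hβ).resolve_right hy, zero_smul, add_zero] using ha

theorem apply_mem_of_pow_apply_mem {T : V →ₗ[K] V} (hT : U ≤ U.comap T) {x : V}
    (hx : T x ∈ U ⊔ Submodule.span K {x}) {n : ℕ} (hn : (T ^ n) x ∈ U) : T x ∈ U := by
  obtain ⟨a, ha, b, hb, hTx⟩ := Submodule.mem_sup.mp hx
  obtain ⟨α, rfl⟩ := Submodule.mem_span_singleton.mp hb
  obtain rfl | hα := eq_or_ne α 0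
  · rwa [← hTx, zero_smul, add_zero]
  suffices x ∈ U from hT this
  -- Modulo `U`, the vector `T ^ (k + 1) x` is the nonzero multiple `α • T ^ k x` of `T ^ k x`.
  induction n with
  | zero => exact hn
  | succ k ih =>
    have hTka : (T ^ k) a ∈ U := U.le_comap_pow_of_le_comap hT k ha
    rw [pow_succ, Module.End.mul_apply, ← hTx, map_add, map_smul, U.add_mem_iff_right hTka,
      U.smul_mem_iff hα] at hn
    exact ih hn

end LinearAlgebra

namespace SymplecticAlternatingAlgebra

/-- The Engel condition: every right multiplication is locally nilpotent, with an exponent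
that may depend on the element it acts on. Right multiplication can then act on a one-dimensional
section only as `0`. -/
def IsEngel (S : SymplecticAlternatingAlgebra 𝔽 L) : Prop :=
  ∀ x u, ∃ n : ℕ, (S.mul.flip u ^ n) x = 0

variable {S : SymplecticAlternatingAlgebra 𝔽 L} {I U V W : Submodule 𝔽 L} {x y : L}

theorem form_isAlt (S : SymplecticAlternatingAlgebra 𝔽 L) : S.form.IsAlt := S.form_alt

theorem form_self_mul (S : SymplecticAlternatingAlgebra 𝔽 L) (x u : L) :
    S.form x (S.mul x u) = 0 := by
  apply S.form_isAlt.isRefl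
  rw [S.compat, S.compat, S.mul_alt, map_zero, LinearMap.zero_apply]

theorem prodSub_le : S.prodSub U V ≤ W ↔ ∀ u ∈ U, ∀ v ∈ V, S.mul u v ∈ W :=
  Submodule.map₂_le

theorem prodSub_top_le : S.prodSub U ⊤ ≤ W ↔ ∀ u ∈ U, ∀ v, S.mul u v ∈ W := by
  simp only [prodSub_le, Submodule.mem_top, true_imp_iff]

theorem prodSub_span_singleton_top_le :
    S.prodSub (Submodule.span 𝔽 {x}) ⊤ ≤ W ↔ ∀ u, S.mul x u ∈ W := by
  rw [prodSub, Submodule.map₂_span_singleton_eq_map, Submodule.map_top]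
  exact LinearMap.range_le_iff_comap.trans Submodule.eq_top_iff'

theorem perp_antitone (S : SymplecticAlternatingAlgebra 𝔽 L) : Antitone S.perp :=
  fun _ _ hUV _ hx _ hu => hx _ (hUV hu)

theorem mul_eq_zero_iff {u v : L} : S.mul u v = 0 ↔ ∀ w, S.form u (S.mul v w) = 0 := by
  constructor
  · intro h w
    apply S.form_isAlt.isRefl
    rw [← S.compat, h, map_zero, LinearMap.zero_apply]
  · intro h
    refine S.form_nondeg _ fun w => ?_
    rw [S.compat]
    exact S.form_isAlt.isRefl _ _ (h w)

theorem mem_perp_prodSub_top :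
    x ∈ S.perp (S.prodSub V ⊤) ↔ ∀ v ∈ V, ∀ w, S.form x (S.mul v w) = 0 :=
  prodSub_top_le (W := LinearMap.ker (S.form x))

theorem prodSub_eq_bot_iff : S.prodSub U V = ⊥ ↔ U ≤ S.perp (S.prodSub V ⊤) := by
  rw [eq_bot_iff, prodSub_le]
  simp only [SetLike.le_def, Submodule.mem_bot, mul_eq_zero_iff, mem_perp_prodSub_top]

theorem pow_flip_mul_apply_mem_lcs (S : SymplecticAlternatingAlgebra 𝔽 L) (x u : L) (n : ℕ) :
    (S.mul.flip u ^ n) x ∈ S.lcs n := by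
  induction n with
  | zero => exact Submodule.mem_top
  | succ n ih =>
    rw [pow_succ', Module.End.mul_apply]
    exact Submodule.apply_mem_map₂ S.mul ih Submodule.mem_top

theorem IsNilpotent.isEngel (hS : S.IsNilpotent) : S.IsEngel := fun x u =>
  let ⟨n, hn⟩ := hS
  ⟨n, (Submodule.mem_bot 𝔽).mp (hn ▸ S.pow_flip_mul_apply_mem_lcs x u n)⟩

theorem prodSub_span_singleton_top_le_of_le_sup (hS : S.IsEngel) (hI : S.IsIdeal I)
    (hx : x ∈ S.perp I) (hxy : S.form x y ≠ 0)
    (h : S.prodSub (Submodule.span 𝔽 {x}) ⊤ ≤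
      I ⊔ Submodule.span 𝔽 {x} ⊔ Submodule.span 𝔽 {y}) :
    S.prodSub (Submodule.span 𝔽 {x}) ⊤ ≤ I := by
  refine prodSub_span_singleton_top_le.mpr fun u => ?_
  have hker : I ⊔ Submodule.span 𝔽 {x} ≤ LinearMap.ker (S.form x) :=
    sup_le hx ((Submodule.span_singleton_le_iff_mem _ _).mpr (S.form_alt x))
  have hxu : S.mul x u ∈ I ⊔ Submodule.span 𝔽 {x} :=
    mem_of_mem_sup_span_singleton_of_apply_eq_zero hker hxy
      (prodSub_span_singleton_top_le.mp h u) (S.form_self_mul x u)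
  have hIu : I ≤ I.comap (S.mul.flip u) := fun a ha => prodSub_top_le.mp hI a ha u
  obtain ⟨n, hn⟩ := hS x u
  exact apply_mem_of_pow_apply_mem hIu hxu (hn ▸ I.zero_mem)

end SymplecticAlternatingAlgebra

theorem ideal_plus_hyperbolic_pair_general
    (S : SymplecticAlternatingAlgebra 𝔽 L) (hS : S.IsEngel)
    (I J : Submodule 𝔽 L) (hI : S.IsIdeal I) (hJ : S.IsIdeal J) (x y : L)
    (hJeq : J = I ⊔ Submodule.span 𝔽 {x} ⊔ Submodule.span 𝔽 {y})
    (hxy : S.form x y ≠ 0) (hx : x ∈ S.perp I) (hy : y ∈ S.perp I) :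
    S.prodSub J ⊤ ≤ I ∧ (I ≤ S.perp I → S.prodSub J J = ⊥) := by
  have hyx : S.form y x ≠ 0 := by rwa [← S.form_isAlt.neg, neg_ne_zero]
  have hxJ : Submodule.span 𝔽 {x} ≤ J := hJeq ▸ le_sup_right.trans le_sup_left
  have hyJ : Submodule.span 𝔽 {y} ≤ J := hJeq ▸ le_sup_right
  have hxL : S.prodSub (Submodule.span 𝔽 {x}) ⊤ ≤ I :=
    prodSub_span_singleton_top_le_of_le_sup hS hI hx hxy
      (((Submodule.map₂_le_map₂_left hxJ).trans hJ).trans_eq hJeq)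
  have hyL : S.prodSub (Submodule.span 𝔽 {y}) ⊤ ≤ I :=
    prodSub_span_singleton_top_le_of_le_sup hS hI hy hyx
      (((Submodule.map₂_le_map₂_left hyJ).trans hJ).trans_eq (hJeq.trans (sup_right_comm ..)))
  have hJL : S.prodSub J ⊤ ≤ I := by
    rw [hJeq, prodSub, Submodule.map₂_sup_left, Submodule.map₂_sup_left]
    exact sup_le (sup_le hI hxL) hyL
  refine ⟨hJL, fun hiso => prodSub_eq_bot_iff.mpr ?_⟩
  calc
    J = I ⊔ Submodule.span 𝔽 {x} ⊔ Submodule.span 𝔽 {y} := hJeq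
    _ ≤ S.perp I := sup_le (sup_le hiso ((Submodule.span_singleton_le_iff_mem ..).mpr hx))
      ((Submodule.span_singleton_le_iff_mem ..).mpr hy)
    _ ≤ S.perp (S.prodSub J ⊤) := S.perp_antitone hJL

theorem ideal_plus_hyperbolic_pair [FiniteDimensional 𝔽 L]
    (S : SymplecticAlternatingAlgebra 𝔽 L) (hnil : S.IsNilpotent)
    (I J : Submodule 𝔽 L) (hI : S.IsIdeal I) (hJ : S.IsIdeal J) (x y : L)
    (hJeq : J = I ⊔ Submodule.span 𝔽 {x} ⊔ Submodule.span 𝔽 {y})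
    (hxy : S.form x y = 1) (hx : x ∈ S.perp I) (hy : y ∈ S.perp I) :
    S.prodSub J ⊤ ≤ I ∧ (I ≤ S.perp I → S.prodSub J J = ⊥) := by
  exact ideal_plus_hyperbolic_pair_general S hnil.isEngel I J hI hJ x y hJeq (hxy ▸ one_ne_zero)
    hx hy
end

section
/- Let L be a nilpotent symplectic alternating algebra over a field 𝔽. Then every ideal of L of dimension 2 is contained in the center Z(L). Equivalently, every ideal of codimension 2 contains L². -/
variable {𝔽 : Type*} [Field 𝔽] {L : Type*} [AddCommGroup L] [Module 𝔽 L]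

open SymplecticAlternatingAlgebra Module

/-!
If `x·L` is at most one-dimensional, then the alternating form `(v, w) ↦ (x·v, w)` has rank at most
one, hence vanishes, and `x` is central by nondegeneracy. Nilpotency acts as a Nakayama lemma:
`J ⊆ J·L + I` forces `J ⊆ I` for every ideal `I`. In particular `I·L` is a proper subspace of a
nonzero ideal `I`, so that `x·L` is at most one-dimensional for `x` in an ideal of dimension two.

If an ideal `I` of codimension two did not contain `L²`, then `M = L² + I` would have codimension
at most one. Since the product is alternating, this gives `L² ⊆ M·L ⊆ L²·L + I`, and therefore
`L² ⊆ I` after all.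
-/

lemma eq_zero_of_isAlt_of_range_le_span_singleton {R M : Type*} [CommRing R] [IsReduced R]
    [AddCommGroup M] [Module R M] {B : M →ₗ[R] M →ₗ[R] R} (hB : B.IsAlt) {f : M →ₗ[R] R}
    (hrange : LinearMap.range B ≤ Submodule.span R {f}) : B = 0 := by
  have hcoeff (v : M) : ∃ a : R, a • f = B v :=
    Submodule.mem_span_singleton.mp (hrange (LinearMap.mem_range_self B v))
  ext v w
  obtain ⟨a, ha⟩ := hcoeff v
  obtain ⟨b, hb⟩ := hcoeff w
  have hmul : B v w * B w v = 0 := calc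
    B v w * B w v = (a * f w) * (b * f v) := by simp [← ha, ← hb]
    _ = (a * f v) * (b * f w) := by ring
    _ = B v v * B w w := by simp [← ha, ← hb]
    _ = 0 := by rw [hB v, zero_mul]
  rw [← hB.neg v w, mul_neg, neg_eq_zero, ← sq] at hmul
  exact (pow_eq_zero_iff two_ne_zero).mp hmul

lemma finrank_quotient_lt_finrank_quotient_of_lt {K V : Type*} [DivisionRing K] [AddCommGroup V]
    [Module K V] {M N : Submodule K V} [FiniteDimensional K (V ⧸ M)] (h : M < N) :
    finrank K (V ⧸ N) < finrank K (V ⧸ M) := by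
  have hne : N.map M.mkQ ≠ ⊥ := by
    rw [Ne, ← LinearMap.le_ker_iff_map, Submodule.ker_mkQ]
    exact h.not_ge
  have hpos : 1 ≤ finrank K (N.map M.mkQ) := Submodule.one_le_finrank_iff.mpr hne
  have hadd := (N.map M.mkQ).finrank_quotient_add_finrank
  rw [(Submodule.quotientQuotientEquivQuotient M N h.le).finrank_eq] at hadd
  lia

namespace SymplecticAlternatingAlgebra

variable {S : SymplecticAlternatingAlgebra 𝔽 L}

lemma mul_mem_prodSub {U V : Submodule 𝔽 L} {u v : L} (hu : u ∈ U) (hv : v ∈ V) :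
    S.mul u v ∈ S.prodSub U V :=
  Submodule.apply_mem_map₂ _ hu hv

lemma mem_center_iff_mul_eq_zero {x : L} : x ∈ S.center ↔ S.mul x = 0 := by
  simp [center, LinearMap.ext_iff]

variable (S) in
lemma isAlt_form_comp_mul (x : L) : (S.form ∘ₗ S.mul x).IsAlt := fun y => by
  simp [S.compat x y y, S.mul_alt y]

lemma mem_center_of_range_mul_le_span_singleton {x z : L}
    (h : LinearMap.range (S.mul x) ≤ Submodule.span 𝔽 {z}) : x ∈ S.center := by
  have hrange : LinearMap.range (S.form ∘ₗ S.mul x) ≤ Submodule.span 𝔽 {S.form z} := by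
    simpa only [LinearMap.range_comp, LinearMap.map_span, Set.image_singleton] using
      Submodule.map_mono (f := S.form) h
  have hform : S.form ∘ₗ S.mul x = 0 :=
    eq_zero_of_isAlt_of_range_le_span_singleton (S.isAlt_form_comp_mul x) hrange
  rw [mem_center_iff_mul_eq_zero]
  ext y
  exact S.form_nondeg _ fun w => LinearMap.congr_fun₂ hform y w

lemma le_center_of_rank_prodSub_le_one {U : Submodule 𝔽 L}
    (h : Module.rank 𝔽 (S.prodSub U ⊤) ≤ 1) : U ≤ S.center := by
  obtain ⟨z, hz⟩ := (rank_submodule_le_one_iff' _).mp h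
  intro x hx
  have hrange : LinearMap.range (S.mul x) ≤ S.prodSub U ⊤ := by
    rintro _ ⟨y, rfl⟩
    exact mul_mem_prodSub hx Submodule.mem_top
  exact mem_center_of_range_mul_le_span_singleton (hrange.trans hz)

lemma le_lcs_sup_of_le_prodSub_sup {I J : Submodule 𝔽 L} (hI : S.IsIdeal I)
    (hJ : J ≤ S.prodSub J ⊤ ⊔ I) (n : ℕ) : J ≤ S.lcs n ⊔ I := by
  induction n with
  | zero => exact le_top.trans le_sup_left
  | succ n ih =>
    calc
      J ≤ S.prodSub J ⊤ ⊔ I := hJ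
      _ ≤ S.prodSub (S.lcs n ⊔ I) ⊤ ⊔ I := sup_le_sup_right (Submodule.map₂_le_map₂_left ih) I
      _ = S.lcs (n + 1) ⊔ (S.prodSub I ⊤ ⊔ I) := by
        simp only [prodSub, lcs, Submodule.map₂_sup_left, sup_assoc]
      _ = S.lcs (n + 1) ⊔ I := by rw [sup_eq_right.mpr hI]

lemma IsNilpotent.le_of_le_prodSub_sup (hnil : S.IsNilpotent) {I J : Submodule 𝔽 L}
    (hI : S.IsIdeal I) (hJ : J ≤ S.prodSub J ⊤ ⊔ I) : J ≤ I := by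
  obtain ⟨n, hn⟩ := hnil
  simpa only [hn, bot_sup_eq] using le_lcs_sup_of_le_prodSub_sup hI hJ n

lemma IsNilpotent.prodSub_top_lt (hnil : S.IsNilpotent) {I : Submodule 𝔽 L} (hI : S.IsIdeal I)
    (hne : I ≠ ⊥) : S.prodSub I ⊤ < I := by
  have hbot : S.IsIdeal ⊥ := (Submodule.map₂_bot_left _ _).le
  refine hI.lt_of_not_ge fun hle => hne (le_bot_iff.mp ?_)
  exact hnil.le_of_le_prodSub_sup hbot (hle.trans le_sup_left)

lemma lcs_one_le_prodSub_top_of_rank_quotient_le_one {M : Submodule 𝔽 L}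
    (h : Module.rank 𝔽 (L ⧸ M) ≤ 1) : S.lcs 1 ≤ S.prodSub M ⊤ := by
  obtain ⟨q, hq⟩ := rank_le_one_iff.mp h
  obtain ⟨x, rfl⟩ := M.mkQ_surjective q
  have hdecomp (u : L) : ∃ m ∈ M, ∃ a : 𝔽, u = m + a • x := by
    obtain ⟨a, ha⟩ := hq (M.mkQ u)
    refine ⟨u - a • x, ?_, a, (sub_add_cancel u _).symm⟩
    rw [← M.ker_mkQ, LinearMap.mem_ker, map_sub, map_smul, ha, sub_self]
  refine Submodule.map₂_le.mpr fun u _ v _ => ?_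
  obtain ⟨m, hm, a, rfl⟩ := hdecomp u
  obtain ⟨n, hn, b, rfl⟩ := hdecomp v
  have hprod : S.mul (m + a • x) (n + b • x) = S.mul m (n + b • x) - a • S.mul n x := by
    have hskew : -S.mul n x = S.mul x n := LinearMap.IsAlt.neg S.mul_alt n x
    simp [S.mul_alt x, ← hskew, sub_eq_add_neg]
  rw [hprod]
  exact sub_mem (mul_mem_prodSub hm Submodule.mem_top)
    (Submodule.smul_mem _ a (mul_mem_prodSub hn Submodule.mem_top))

lemma IsNilpotent.le_center_of_finrank_le_two (hnil : S.IsNilpotent) {I : Submodule 𝔽 L}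
    [FiniteDimensional 𝔽 I] (hI : S.IsIdeal I) (hdim : finrank 𝔽 I ≤ 2) : I ≤ S.center := by
  rcases eq_or_ne I ⊥ with rfl | hne
  · exact bot_le
  have hlt : S.prodSub I ⊤ < I := hnil.prodSub_top_lt hI hne
  have : FiniteDimensional 𝔽 (S.prodSub I ⊤) := Submodule.finiteDimensional_of_le hI
  have hfinrank : finrank 𝔽 (S.prodSub I ⊤) ≤ 1 := by
    have := Submodule.finrank_lt_finrank_of_lt hlt
    lia
  refine le_center_of_rank_prodSub_le_one ?_
  rw [← finrank_eq_rank]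
  exact_mod_cast hfinrank

lemma IsNilpotent.lcs_one_le_of_finrank_quotient_le_two (hnil : S.IsNilpotent)
    {I : Submodule 𝔽 L} [FiniteDimensional 𝔽 (L ⧸ I)] (hI : S.IsIdeal I)
    (hcodim : finrank 𝔽 (L ⧸ I) ≤ 2) : S.lcs 1 ≤ I := by
  by_contra hle
  have hlt : I < S.lcs 1 ⊔ I := right_lt_sup.mpr hle
  have : FiniteDimensional 𝔽 (L ⧸ (S.lcs 1 ⊔ I)) :=
    Module.Finite.of_surjective (Submodule.factor hlt.le) (Submodule.factor_surjective hlt.le)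
  have hrank : Module.rank 𝔽 (L ⧸ (S.lcs 1 ⊔ I)) ≤ 1 := by
    have := finrank_quotient_lt_finrank_quotient_of_lt hlt
    rw [← finrank_eq_rank]
    exact_mod_cast (by lia : finrank 𝔽 (L ⧸ (S.lcs 1 ⊔ I)) ≤ 1)
  refine hle (hnil.le_of_le_prodSub_sup hI ?_)
  calc
    S.lcs 1 ≤ S.prodSub (S.lcs 1 ⊔ I) ⊤ := lcs_one_le_prodSub_top_of_rank_quotient_le_one hrank
    _ = S.prodSub (S.lcs 1) ⊤ ⊔ S.prodSub I ⊤ := Submodule.map₂_sup_left _ _ _ _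
    _ ≤ S.prodSub (S.lcs 1) ⊤ ⊔ I := sup_le_sup_left hI _

end SymplecticAlternatingAlgebra

theorem two_dim_ideal_le_center_general (S : SymplecticAlternatingAlgebra 𝔽 L)
    (hnil : S.IsNilpotent) :
    (∀ I : Submodule 𝔽 L, S.IsIdeal I → finrank 𝔽 I = 2 → I ≤ S.center) ∧
    (∀ I : Submodule 𝔽 L, S.IsIdeal I → finrank 𝔽 (L ⧸ I) = 2 → S.lcs 1 ≤ I) := by
  refine ⟨fun I hI hdim => ?_, fun I hI hcodim => ?_⟩
  · have : FiniteDimensional 𝔽 I := Module.finite_of_finrank_eq_succ hdim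
    exact hnil.le_center_of_finrank_le_two hI hdim.le
  · have : FiniteDimensional 𝔽 (L ⧸ I) := Module.finite_of_finrank_eq_succ hcodim
    exact hnil.lcs_one_le_of_finrank_quotient_le_two hI hcodim.le

theorem two_dim_ideal_le_center [FiniteDimensional 𝔽 L]
    (S : SymplecticAlternatingAlgebra 𝔽 L) (hnil : S.IsNilpotent) :
    (∀ I : Submodule 𝔽 L, S.IsIdeal I → Module.finrank 𝔽 I = 2 → I ≤ S.center) ∧
    (∀ I : Submodule 𝔽 L, S.IsIdeal I →
      Module.finrank 𝔽 I + 2 = Module.finrank 𝔽 L → S.lcs 1 ≤ I) := by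
  obtain ⟨hdim, hcodim⟩ := two_dim_ideal_le_center_general S hnil
  refine ⟨hdim, fun I hI h => hcodim I hI ?_⟩
  rw [I.finrank_quotient, ← h, Nat.add_sub_cancel_left]
end

section
/- Let L be a nilpotent symplectic alternating algebra over a field 𝔽. For every i ≥ 2, the terms of the upper central series satisfy the inequality dim Z_i(L) − dim Z_{i−1}(L) ≤ ½ (dim Z_{i−1}(L) − dim Z_{i−2}(L)) (dim Z_{i−1}(L) + dim Z_{i−2}(L) − 1). -/
/-!
Moving a factor across the form, `(w, x·y) = (w·y, x)`, shows inductively that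
`Z_n(L) = (L^{n+1})^⊥`. Hence `dim Z_n(L) + dim L^{n+1} = dim L`, and the claim becomes an upper
bound for `dim L^{n+2} / L^{n+3}`.

Choose complements: `L^{n+1} = L^{n+2} ⊕ C` and `L = L^{n+1} ⊕ V`, so that `dim V = dim Z_n` and
`dim C = dim Z_{n+1} - dim Z_n`. Since `L^{n+2}·L = L^{n+3}` and the product is alternating,
`L^{n+2} = L^{n+1}·L = L^{n+3} + C·C + C·V`. Here `C·C` is a quotient of `⋀²C` and `C·V` is a
quotient of `C ⊗ V`.
-/

variable {𝔽 : Type*} [Field 𝔽] {L : Type*} [AddCommGroup L] [Module 𝔽 L]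

open SymplecticAlternatingAlgebra Module

section Bilinear

variable {E F M : Type*} [AddCommGroup E] [Module 𝔽 E] [AddCommGroup F] [Module 𝔽 F]
  [AddCommGroup M] [Module 𝔽 M]

theorem finrank_map₂_le_mul (f : E →ₗ[𝔽] F →ₗ[𝔽] M) (U : Submodule 𝔽 E) (V : Submodule 𝔽 F)
    [FiniteDimensional 𝔽 U] [FiniteDimensional 𝔽 V] :
    finrank 𝔽 (Submodule.map₂ f U V) ≤ finrank 𝔽 U * finrank 𝔽 V := by
  rw [TensorProduct.map₂_eq_range_lift_comp_mapIncl, ← finrank_tensorProduct (R := 𝔽) (S := 𝔽)]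
  exact LinearMap.finrank_range_le _

/-- The alternating map on pairs given by an alternating bilinear map; this is the form in which
it factors through the exterior square. -/
def alternatingMapOfIsAlt (f : E →ₗ[𝔽] E →ₗ[𝔽] M) (hf : f.IsAlt) : E [⋀^Fin 2]→ₗ[𝔽] M where
  toFun v := f (v 0) (v 1)
  map_update_add' v i x y := by fin_cases i <;> simp [Function.update]
  map_update_smul' v i c x := by fin_cases i <;> simp [Function.update]
  map_eq_zero_of_eq' v i j hv hij := by
    have h01 : v 0 = v 1 := by grind
    rw [h01, hf.self_eq_zero]

theorem finrank_map₂_self_le_choose_two {f : E →ₗ[𝔽] E →ₗ[𝔽] M} (hf : f.IsAlt)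
    (U : Submodule 𝔽 E) [FiniteDimensional 𝔽 U] :
    finrank 𝔽 (Submodule.map₂ f U U) ≤ (finrank 𝔽 U).choose 2 := by
  let g := exteriorPower.alternatingMapLinearEquiv
    ((alternatingMapOfIsAlt f hf).compLinearMap U.subtype)
  have map₂_le_range : Submodule.map₂ f U U ≤ LinearMap.range g :=
    Submodule.map₂_le.2 fun u hu v hv =>
      ⟨exteriorPower.ιMulti 𝔽 2 ![⟨u, hu⟩, ⟨v, hv⟩],
        exteriorPower.alternatingMapLinearEquiv_apply_ιMulti _ _⟩
  rw [← exteriorPower.finrank_eq (R := 𝔽) (M := U)]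
  exact (Submodule.finrank_mono map₂_le_range).trans (LinearMap.finrank_range_le g)

theorem map₂_comm_of_isAlt {f : E →ₗ[𝔽] E →ₗ[𝔽] M} (hf : f.IsAlt) (U V : Submodule 𝔽 E) :
    Submodule.map₂ f U V = Submodule.map₂ f V U := by
  have map₂_le_swap (U V : Submodule 𝔽 E) : Submodule.map₂ f U V ≤ Submodule.map₂ f V U :=
    Submodule.map₂_le.2 fun u hu v hv => by
      rw [← hf.neg]
      exact neg_mem (Submodule.apply_mem_map₂ f hv hu)
  exact le_antisymm (map₂_le_swap U V) (map₂_le_swap V U)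

theorem map₂_sup_top_le_of_isAlt {f : E →ₗ[𝔽] E →ₗ[𝔽] M} (hf : f.IsAlt) {N C V : Submodule 𝔽 E}
    (hV : N ⊔ C ⊔ V = ⊤) :
    Submodule.map₂ f (N ⊔ C) ⊤ ≤
      Submodule.map₂ f N ⊤ ⊔ (Submodule.map₂ f C C ⊔ Submodule.map₂ f C V) := by
  have map₂_C_N_le : Submodule.map₂ f C N ≤ Submodule.map₂ f N ⊤ :=
    (map₂_comm_of_isAlt hf C N).trans_le (Submodule.map₂_le_map₂_right le_top)
  rw [Submodule.map₂_sup_left, ← hV, Submodule.map₂_sup_right f C, Submodule.map₂_sup_right f C,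
    hV, sup_assoc]
  exact sup_le le_sup_left (sup_le_sup_right map₂_C_N_le _)

theorem finrank_map₂_sup_top_le_of_isAlt [FiniteDimensional 𝔽 E] {f : E →ₗ[𝔽] E →ₗ[𝔽] M}
    (hf : f.IsAlt) {N C V : Submodule 𝔽 E} (hV : N ⊔ C ⊔ V = ⊤) :
    finrank 𝔽 (Submodule.map₂ f (N ⊔ C) ⊤) ≤ finrank 𝔽 (Submodule.map₂ f N ⊤) +
      ((finrank 𝔽 C).choose 2 + finrank 𝔽 C * finrank 𝔽 V) := by
  have (U W : Submodule 𝔽 E) : FiniteDimensional 𝔽 (Submodule.map₂ f U W) :=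
    .of_fg <| .map₂ f (IsNoetherian.noetherian U) (IsNoetherian.noetherian W)
  calc finrank 𝔽 (Submodule.map₂ f (N ⊔ C) ⊤)
      ≤ finrank 𝔽 ↥(Submodule.map₂ f N ⊤ ⊔ (Submodule.map₂ f C C ⊔ Submodule.map₂ f C V)) :=
        Submodule.finrank_mono (map₂_sup_top_le_of_isAlt hf hV)
    _ ≤ finrank 𝔽 (Submodule.map₂ f N ⊤) +
          (finrank 𝔽 (Submodule.map₂ f C C) + finrank 𝔽 (Submodule.map₂ f C V)) :=
        (Submodule.finrank_add_le_finrank_add_finrank _ _).trans <|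
          Nat.add_le_add_left (Submodule.finrank_add_le_finrank_add_finrank _ _) _
    _ ≤ finrank 𝔽 (Submodule.map₂ f N ⊤) +
          ((finrank 𝔽 C).choose 2 + finrank 𝔽 C * finrank 𝔽 V) :=
        Nat.add_le_add_left
          (Nat.add_le_add (finrank_map₂_self_le_choose_two hf C) (finrank_map₂_le_mul f C V)) _

end Bilinear

namespace SymplecticAlternatingAlgebra

variable (S : SymplecticAlternatingAlgebra 𝔽 L)

theorem form_mul_right (w x y : L) : S.form w (S.mul x y) = S.form (S.mul w y) x := by
  have hform : S.form.IsAlt := S.form_alt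
  have hmul : S.mul.IsAlt := S.mul_alt
  rw [← hform.neg, S.compat, ← hmul.neg w y, map_neg, LinearMap.neg_apply, neg_neg]

theorem mem_perp_prodSub_iff {U V : Submodule 𝔽 L} {x : L} :
    x ∈ S.perp (S.prodSub U V) ↔ ∀ v ∈ V, S.mul x v ∈ S.perp U := by
  calc x ∈ S.perp (S.prodSub U V)
      ↔ S.prodSub U V ≤ LinearMap.ker (S.form x) := Iff.rfl
    _ ↔ ∀ u ∈ U, ∀ v ∈ V, S.form x (S.mul u v) = 0 := Submodule.map₂_le
    _ ↔ ∀ u ∈ U, ∀ v ∈ V, S.form (S.mul x v) u = 0 := by simp only [form_mul_right]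
    _ ↔ ∀ v ∈ V, S.mul x v ∈ S.perp U := forall₂_comm

theorem finrank_ucs_add_finrank_lcs [FiniteDimensional 𝔽 L] (n : ℕ) :
    finrank 𝔽 (S.ucs n) + finrank 𝔽 (S.lcs n) = finrank 𝔽 L := by
  rw [ucs_eq_perp_lcs, finrank_perp_add_finrank]

theorem lcs_succ_le (n : ℕ) : S.lcs (n + 1) ≤ S.lcs n := by
  induction n with
  | zero => exact le_top
  | succ n ih => exact Submodule.map₂_le_map₂_left ih

theorem finrank_ucs_add_two_le [FiniteDimensional 𝔽 L] (n : ℕ) :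
    finrank 𝔽 (S.ucs (n + 2)) ≤ finrank 𝔽 (S.ucs (n + 1)) +
      ((finrank 𝔽 (S.ucs (n + 1)) - finrank 𝔽 (S.ucs n)).choose 2 +
        (finrank 𝔽 (S.ucs (n + 1)) - finrank 𝔽 (S.ucs n)) * finrank 𝔽 (S.ucs n)) := by
  have h₀ := S.finrank_ucs_add_finrank_lcs n
  have h₁ := S.finrank_ucs_add_finrank_lcs (n + 1)
  have h₂ := S.finrank_ucs_add_finrank_lcs (n + 2)
  obtain ⟨C, hdisj, hsup⟩ := IsModularLattice.exists_disjoint_and_sup_eq (S.lcs_succ_le n)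
  obtain ⟨V, hV⟩ := exists_isCompl (S.lcs n)
  have finrank_C : finrank 𝔽 C = finrank 𝔽 (S.ucs (n + 1)) - finrank 𝔽 (S.ucs n) := by
    have := Submodule.finrank_sup_add_finrank_inf_eq (S.lcs (n + 1)) C
    rw [hsup, hdisj.eq_bot, finrank_bot] at this
    lia
  have finrank_V : finrank 𝔽 V = finrank 𝔽 (S.ucs n) := by
    have := Submodule.finrank_add_eq_of_isCompl hV
    lia
  have finrank_lcs_succ_le : finrank 𝔽 (S.lcs (n + 1)) ≤ finrank 𝔽 (S.lcs (n + 2)) +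
      ((finrank 𝔽 C).choose 2 + finrank 𝔽 C * finrank 𝔽 V) := by
    have := finrank_map₂_sup_top_le_of_isAlt S.mul_alt (hsup.symm ▸ hV.sup_eq_top)
    rwa [hsup] at this
  rw [finrank_C, finrank_V] at finrank_lcs_succ_le
  lia

end SymplecticAlternatingAlgebra

theorem two_mul_choose_two_add_mul (a b : ℕ) :
    2 * ((b - a).choose 2 + (b - a) * a) = (b - a) * (b + a - 1) := by
  obtain hba | ⟨k, rfl⟩ : b ≤ a ∨ ∃ k, b = a + (k + 1) := by
    rcases le_or_gt b a with hba | hab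
    · exact .inl hba
    · exact .inr (Nat.exists_eq_add_of_lt hab)
  · simp only [Nat.sub_eq_zero_of_le hba, Nat.choose_zero_succ, zero_mul, mul_zero, add_zero]
  · have two_mul_choose_two : 2 * (k + 1).choose 2 = (k + 1) * k := by
      rw [mul_comm, ← Nat.add_one_mul_choose_eq, Nat.choose_one_right]
    rw [Nat.add_sub_cancel_left, mul_add, two_mul_choose_two,
      show a + (k + 1) + a - 1 = k + 2 * a by lia]
    ring

theorem ucs_growth_inequality_general [FiniteDimensional 𝔽 L]
    (S : SymplecticAlternatingAlgebra 𝔽 L) (n : ℕ) :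
    2 * (finrank 𝔽 (S.ucs (n + 2)) - finrank 𝔽 (S.ucs (n + 1))) ≤
      (finrank 𝔽 (S.ucs (n + 1)) - finrank 𝔽 (S.ucs n)) *
        (finrank 𝔽 (S.ucs (n + 1)) + finrank 𝔽 (S.ucs n) - 1) := by
  rw [← two_mul_choose_two_add_mul]
  exact Nat.mul_le_mul_left 2 (Nat.sub_le_iff_le_add'.2 (S.finrank_ucs_add_two_le n))

theorem ucs_growth_inequality [FiniteDimensional 𝔽 L]
    (S : SymplecticAlternatingAlgebra 𝔽 L) (hnil : S.IsNilpotent) :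
    ∀ i : ℕ, 2 ≤ i →
      2 * (Module.finrank 𝔽 (S.ucs i) - Module.finrank 𝔽 (S.ucs (i - 1))) ≤
        (Module.finrank 𝔽 (S.ucs (i - 1)) - Module.finrank 𝔽 (S.ucs (i - 2))) *
          (Module.finrank 𝔽 (S.ucs (i - 1)) + Module.finrank 𝔽 (S.ucs (i - 2)) - 1) := by
  intro i hi
  obtain ⟨n, rfl⟩ := Nat.exists_eq_add_of_le' hi
  exact ucs_growth_inequality_general S n
end
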